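/- arXiv:1410.7572 — 2 statements merged into one kernel-verified Lean document; each statement's English description precedes it below -/
import Mathlib

section
/- Let d ≥ 1 and T > 0. Suppose h : [0,T] × ℝ^d → ℝ is 2π-periodic in each spatial coordinate, continuously differentiable in time and twice continuously differentiable in space, and is a classical solution of ∂_t h = ∇·((|∇h|² − 1)∇h) on [0,T] × ℝ^d. Then for every t ∈ [0,T], sup_{x ∈ ℝ^d} |∇h(t,x)| ≤ max{ sup_{x ∈ ℝ^d} |∇h(0,x)|, 1 }. -/
open Real MeasureTheory Set Filter
open scoped ENNReal

noncomputable section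

/-- `ℝ^d` with the Euclidean norm. -/
abbrev Ed (d : ℕ) := EuclideanSpace ℝ (Fin d)

/-- The fundamental domain `[-π,π]^d` of the torus `𝕋^d = ℝ^d/2πℤ^d`. -/
def Qd (d : ℕ) : Set (Ed d) := {x | ∀ i, |x i| ≤ Real.pi}

/-- The partial derivative `∂_{x_j} f` of `f : ℝ^d → ℝ`. -/
noncomputable def pd {d : ℕ} (f : Ed d → ℝ) (j : Fin d) (x : Ed d) : ℝ :=
  fderiv ℝ f x (EuclideanSpace.single j 1)

/-- `|∇f|²`, the squared Euclidean norm of the spatial gradient. -/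
noncomputable def gradSq {d : ℕ} (f : Ed d → ℝ) (x : Ed d) : ℝ := ∑ j, pd f j x ^ 2

/-- `|∇f|`, the Euclidean norm of the spatial gradient. -/
noncomputable def gradNorm {d : ℕ} (f : Ed d → ℝ) (x : Ed d) : ℝ := Real.sqrt (gradSq f x)

/-- The Laplacian `Δf = Σ_j ∂_{x_j}∂_{x_j} f`. -/
noncomputable def lapl {d : ℕ} (f : Ed d → ℝ) (x : Ed d) : ℝ := ∑ j, pd (pd f j) j x

/-- The slope-selection divergence term `∇·((|∇f|²−1)∇f) = Σ_j ∂_{x_j}((|∇f|²−1)∂_{x_j}f)`. -/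
noncomputable def slopeDiv {d : ℕ} (f : Ed d → ℝ) (x : Ed d) : ℝ :=
  ∑ j, pd (fun y => (gradSq f y - 1) * pd f j y) j x

/-- `f` is `2π`-periodic in each coordinate. -/
def PeriodicSpace {d : ℕ} (f : Ed d → ℝ) : Prop :=
  ∀ (j : Fin d) (x : Ed d), f (x + (2 * Real.pi) • EuclideanSpace.single j 1) = f x

open Topology

lemma inner_single_grad {d : ℕ} (f : Ed d → ℝ) (x : Ed d) (j : Fin d) :
    (gradient f x) j = pd f j x := by
  have h1 : inner ℝ (gradient f x) (EuclideanSpace.single j (1:ℝ)) = pd f j x := by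
    unfold gradient pd
    rw [InnerProductSpace.toDual_symm_apply]
  rw [← h1, EuclideanSpace.inner_single_right]
  simp

lemma gradNorm_eq {d : ℕ} (f : Ed d → ℝ) (x : Ed d) : gradNorm f x = ‖fderiv ℝ f x‖ := by
  have h1 : ‖gradient f x‖ = ‖fderiv ℝ f x‖ := by
    unfold gradient
    exact LinearIsometryEquiv.norm_map _ _
  rw [← h1, EuclideanSpace.norm_eq]
  unfold gradNorm gradSq
  simp [inner_single_grad]

/-- second derivative -/
def D2 {d : ℕ} (f : Ed d → ℝ) (x : Ed d) : Ed d →L[ℝ] Ed d →L[ℝ] ℝ :=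
  fderiv ℝ (fderiv ℝ f) x

lemma hasD2 {d : ℕ} {f : Ed d → ℝ} (hf : ContDiff ℝ 2 f) (x : Ed d) :
    HasFDerivAt (fderiv ℝ f) (D2 f x) x := by
  have h1 : ContDiff ℝ 1 (fderiv ℝ f) := hf.fderiv_right (by norm_num)
  exact (h1.differentiable (by norm_num) x).hasFDerivAt

lemma hasDir {d : ℕ} {f : Ed d → ℝ} (hf : ContDiff ℝ 2 f) (x v : Ed d) :
    HasFDerivAt (fun y => fderiv ℝ f y v) ((D2 f x).flip v) x := by
  have := (hasD2 hf x).clm_apply (hasFDerivAt_const v x)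
  exact this.congr_fderiv (by ext w; simp)

lemma hasPd {d : ℕ} {f : Ed d → ℝ} (hf : ContDiff ℝ 2 f) (x : Ed d) (j : Fin d) :
    HasFDerivAt (pd f j) ((D2 f x).flip (EuclideanSpace.single j 1)) x := by
  exact hasDir hf x _

lemma slopeDiv_eq {d : ℕ} {f : Ed d → ℝ} (hf : ContDiff ℝ 2 f) (x : Ed d) :
    slopeDiv f x = (gradSq f x - 1) * ∑ j, D2 f x (EuclideanSpace.single j 1)
        (EuclideanSpace.single j 1)
      + 2 * D2 f x (∑ j, pd f j x • EuclideanSpace.single j 1)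
        (∑ j, pd f j x • EuclideanSpace.single j 1) := by
  have hg : HasFDerivAt (gradSq f)
      (∑ k, (2 * pd f k x) • ((D2 f x).flip (EuclideanSpace.single k 1))) x := by
    have : HasFDerivAt (fun y => ∑ k, pd f k y ^ 2)
      (∑ k, (2 * pd f k x) • ((D2 f x).flip (EuclideanSpace.single k 1))) x := by
      refine HasFDerivAt.fun_sum fun k _ => ?_
      simpa using (hasPd hf x k).pow 2
    exact this
  have hj : ∀ j, pd (fun y => (gradSq f y - 1) * pd f j y) j x =
      (gradSq f x - 1) * D2 f x (EuclideanSpace.single j 1) (EuclideanSpace.single j 1)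
      + pd f j x * ∑ k, (2 * pd f k x) * D2 f x (EuclideanSpace.single j 1)
        (EuclideanSpace.single k 1) := by
    intro j
    have := ((hg.sub_const 1).mul (hasPd hf x j)).fderiv
    rw [pd]
    erw [this]
    simp
  unfold slopeDiv
  simp only [hj, Finset.sum_add_distrib, ← Finset.mul_sum]
  congr 1
  simp only [map_sum, map_smul, _root_.sum_apply, _root_.smul_apply,
    smul_eq_mul, Finset.mul_sum]
  rw [Finset.sum_comm]
  refine Finset.sum_congr rfl fun i _ => Finset.sum_congr rfl fun k _ => ?_
  ring

lemma second_test (φ φ' : ℝ → ℝ) (c : ℝ) (h1 : ∀ s, HasDerivAt φ (φ' s) s)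
    (h2 : HasDerivAt φ' c 0) (hm : ∀ s, φ s ≤ φ 0) : c ≤ 0 := by
  by_contra! hc
  have hd : deriv φ = φ' := funext fun s => (h1 s).deriv
  have hmax : IsLocalMax φ 0 := Filter.Eventually.of_forall hm
  have hmin : IsLocalMin φ 0 := by
    apply isLocalMin_of_deriv_deriv_pos
    · rw [hd, h2.deriv]; exact hc
    · exact hmax.deriv_eq_zero
    · exact (h1 0).continuousAt
  have he : φ =ᶠ[𝓝 0] fun _ => φ 0 := by
    filter_upwards [hmin] with s hs
    exact le_antisymm (hm s) hs
  have he2 := he.deriv.deriv_eq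
  rw [hd, h2.deriv] at he2
  simp at he2
  linarith

lemma line_deriv' {d : ℕ} (x v : Ed d) (s : ℝ) :
    HasDerivAt (fun s : ℝ => x + s • v) v s := by
  simpa using ((hasDerivAt_id s).smul_const v).const_add x

lemma D2_le {d : ℕ} {f : Ed d → ℝ} (hf : ContDiff ℝ 2 f) (x y : Ed d)
    (hm : ∀ z, f (x + z) - f (y + z) ≤ f x - f y) (v : Ed d) :
    D2 f x v v ≤ D2 f y v v := by
  have hdf : ∀ x, HasFDerivAt f (fderiv ℝ f x) x := fun x =>
    (hf.differentiable (by norm_num) x).hasFDerivAt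
  have a1 : ∀ x s, HasDerivAt (fun s : ℝ => f (x + s • v)) (fderiv ℝ f (x + s • v) v) s :=
    fun x s => (hdf _).comp_hasDerivAt s (line_deriv' x v s)
  have a2 : ∀ x, HasDerivAt (fun s : ℝ => fderiv ℝ f (x + s • v) v) (D2 f x v v) 0 := by
    intro x
    have h0 : HasFDerivAt (fun y => fderiv ℝ f y v) ((D2 f x).flip v) (x + (0:ℝ) • v) := by
      rw [zero_smul, add_zero]
      exact hasDir hf x v
    exact h0.comp_hasDerivAt (0:ℝ) (line_deriv' x v 0)
  have := second_test (fun s => f (x + s • v) - f (y + s • v)) _ _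
    (fun s => (a1 x s).sub (a1 y s)) ((a2 x).sub (a2 y)) (fun s => by simpa using hm (s • v))
  linarith

lemma fderiv_eq_of {d : ℕ} {f : Ed d → ℝ} (hf : ContDiff ℝ 2 f) (x y : Ed d)
    (hm : ∀ z, f (x + z) - f (y + z) ≤ f x - f y) : fderiv ℝ f x = fderiv ℝ f y := by
  have hdf : ∀ x, HasFDerivAt f (fderiv ℝ f x) x := fun x =>
    (hf.differentiable (by norm_num) x).hasFDerivAt
  have a1 : ∀ x, HasFDerivAt (fun z => f (x + z)) (fderiv ℝ f x) 0 := by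
    intro x
    have h0 : HasFDerivAt f (fderiv ℝ f x) (x + 0) := by simpa using hdf x
    have := h0.comp (0 : Ed d) ((hasFDerivAt_id (0 : Ed d)).const_add x)
    exact this.congr_fderiv (by ext; simp)
  have hmax : IsLocalMax (fun z => f (x + z) - f (y + z)) 0 :=
    Filter.Eventually.of_forall (fun z => by simpa using hm z)
  have := hmax.hasFDerivAt_eq_zero ((a1 x).sub (a1 y))
  exact sub_eq_zero.1 this

lemma grad_ge {d : ℕ} {f : Ed d → ℝ} (hf : ContDiff ℝ 2 f) (L : ℝ) (x y : Ed d) (hxy : x ≠ y)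
    (hm : ∀ x', f x' - f y - L * ‖x' - y‖ ≤ f x - f y - L * ‖x - y‖) : L ≤ ‖fderiv ℝ f x‖ := by
  have hpos : 0 < ‖x - y‖ := norm_pos_iff.2 (sub_ne_zero.2 hxy)
  have h0 : HasFDerivAt f (fderiv ℝ f x) (x + (0:ℝ) • (y - x)) := by
    simpa using (hf.differentiable (by norm_num) x).hasFDerivAt
  have h1 := h0.comp_hasDerivAt (0:ℝ) (line_deriv' x (y - x) 0)
  have h2 := h1.add ((hasDerivAt_id (0:ℝ)).mul_const (L * ‖x - y‖))
  have hmax : IsLocalMax ((f ∘ fun s : ℝ => x + s • (y - x)) + fun s : ℝ => id s * (L * ‖x - y‖)) 0 := by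
    filter_upwards [Iio_mem_nhds (show (0:ℝ) < 1 by norm_num)] with s hs
    have hs : s < 1 := hs
    have e : x + s • (y - x) - y = (1 - s) • (x - y) := by module
    have := hm (x + s • (y - x))
    rw [e, norm_smul, Real.norm_of_nonneg (by linarith)] at this
    simp
    linarith
  have h3 := hmax.hasDerivAt_eq_zero h2
  have h4 := (fderiv ℝ f x).le_opNorm (y - x)
  have h5 := neg_abs_le (fderiv ℝ f x (y - x))
  rw [Real.norm_eq_abs, norm_sub_rev] at h4
  have : L * ‖x - y‖ ≤ ‖fderiv ℝ f x‖ * ‖x - y‖ := by linarith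
  exact le_of_mul_le_mul_right this hpos

lemma slopeDiv_le {d : ℕ} {f : Ed d → ℝ} (hf : ContDiff ℝ 2 f) (L : ℝ) (hL : 1 ≤ L)
    (x y : Ed d) (hxy : x ≠ y)
    (hm : ∀ x' y', f x' - f y' - L * ‖x' - y'‖ ≤ f x - f y - L * ‖x - y‖) :
    slopeDiv f x ≤ slopeDiv f y := by
  have hm1 : ∀ z, f (x + z) - f (y + z) ≤ f x - f y := by
    intro z
    have := hm (x + z) (y + z)
    rw [add_sub_add_right_eq_sub] at this
    linarith
  have hfd := fderiv_eq_of hf x y hm1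
  have hg := grad_ge hf L x y hxy (fun x' => hm x' y)
  have hpd : ∀ j, pd f j x = pd f j y := fun j => by unfold pd; rw [hfd]
  have hgs : gradSq f x = gradSq f y := by unfold gradSq; simp [hpd]
  have hge : 1 ≤ gradSq f y := by
    rw [← gradNorm_eq] at hg
    rw [← hgs]
    exact Real.one_le_sqrt.1 (hL.trans hg)
  rw [slopeDiv_eq hf, slopeDiv_eq hf, hgs]
  simp only [hpd]
  have b1 := D2_le hf x y hm1
  have b2 := Finset.sum_le_sum (s := Finset.univ) (fun j _ => b1 (EuclideanSpace.single j (1:ℝ)))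
  have b3 := b1 (∑ j, pd f j y • EuclideanSpace.single j 1)
  have b4 := mul_le_mul_of_nonneg_left b2 (sub_nonneg.2 hge)
  linarith

lemma exists_shift {d : ℕ} (x : Ed d) : ∃ v : Ed d, x + v ∈ Qd d ∧
    ∀ f : Ed d → ℝ, PeriodicSpace f → ∀ y, f (y + v) = f y := by
  refine ⟨∑ j, (-round (x j / (2 * π)) : ℤ) • ((2 * π) • EuclideanSpace.single j (1:ℝ)), ?_, ?_⟩
  · intro i
    have h1 := abs_sub_round (x i / (2 * π))
    have hp := Real.pi_pos
    have e : (x + ∑ j, (-round (x j / (2 * π)) : ℤ) • ((2 * π) • EuclideanSpace.single j (1:ℝ))) i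
        = (x i / (2 * π) - round (x i / (2 * π))) * (2 * π) := by
      simp [Finset.sum_apply, Pi.single_apply]
      field_simp
      ring
    rw [e, abs_mul, abs_of_pos (by positivity : 0 < 2 * π)]
    nlinarith
  · intro f hf
    have key : ∀ s : Finset (Fin d), Function.Periodic f
        (∑ j ∈ s, (-round (x j / (2 * π)) : ℤ) • ((2 * π) • EuclideanSpace.single j (1:ℝ))) := by
      classical
      intro s
      induction s using Finset.induction_on with
      | empty => intro y; simp
      | insert a s ha ih =>
        rw [Finset.sum_insert ha]
        have : Function.Periodic f ((2 * π) • EuclideanSpace.single a (1:ℝ)) := fun y => hf a y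
        exact (this.zsmul _).add_period ih
    exact key _

lemma Qd_compact (d : ℕ) : IsCompact (Qd d) := by
  apply Metric.isCompact_of_isClosed_isBounded
  · unfold Qd
    simp only [Set.ofPred_forall]
    refine isClosed_iInter fun i => isClosed_le (by fun_prop) continuous_const
  · refine (Metric.isBounded_iff_subset_closedBall 0).2 ⟨√(∑ _i : Fin d, π ^ 2), fun x hx => ?_⟩
    rw [mem_closedBall_zero_iff, EuclideanSpace.norm_eq]
    refine Real.sqrt_le_sqrt (Finset.sum_le_sum fun i _ => ?_)
    exact pow_le_pow_left₀ (norm_nonneg _) (hx i) 2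

lemma grad_bdd {d : ℕ} {f : Ed d → ℝ} (hf : ContDiff ℝ 2 f) (hp : PeriodicSpace f) :
    BddAbove (range (gradNorm f)) := by
  have hc : Continuous (fun x => ‖fderiv ℝ f x‖) := (hf.continuous_fderiv (by norm_num)).norm
  obtain ⟨C, hC⟩ := (Qd_compact d).bddAbove_image hc.continuousOn
  refine ⟨C, ?_⟩
  rintro _ ⟨x, rfl⟩
  obtain ⟨v, hv, hv2⟩ := exists_shift x
  have : fderiv ℝ f x = fderiv ℝ f (x + v) := by
    rw [← fderiv_comp_add_right]
    congr 1
    funext y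
    exact (hv2 f hp y).symm
  rw [gradNorm_eq, this]
  exact hC ⟨_, hv, rfl⟩

lemma main_lip (d : ℕ) (T : ℝ) (h : ℝ → Ed d → ℝ)
    (hper : ∀ t ∈ Icc 0 T, PeriodicSpace (h t))
    (hregx : ∀ t ∈ Icc 0 T, ContDiff ℝ 2 (h t))
    (hcont : ContinuousOn (fun p : ℝ × Ed d => h p.1 p.2) (Icc 0 T ×ˢ univ))
    (hpde : ∀ (x : Ed d), ∀ t ∈ Icc 0 T,
      HasDerivWithinAt (fun s => h s x) (slopeDiv (h t) x) (Icc 0 T) t)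
    (L : ℝ) (hL : 1 ≤ L) (h0 : ∀ x y, h 0 x - h 0 y ≤ L * ‖x - y‖) (ε : ℝ) (hε : 0 < ε) :
    ∀ t ∈ Icc 0 T, ∀ x y, h t x - h t y - L * ‖x - y‖ - ε * t ≤ 0 := by
  by_contra! hcon
  obtain ⟨t1, ht1, x1, y1, hw1⟩ := hcon
  -- bound
  obtain ⟨M, hM⟩ : ∃ M, ∀ t ∈ Icc 0 T, ∀ x, |h t x| ≤ M := by
    obtain ⟨M, hM⟩ := ((isCompact_Icc (a := (0:ℝ)) (b := T)).prod (Qd_compact d)).exists_bound_of_continuousOn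
      (hcont.mono (Set.prod_mono le_rfl (subset_univ _)))
    refine ⟨M, fun t ht x => ?_⟩
    obtain ⟨v, hv, hv2⟩ := exists_shift x
    rw [← hv2 _ (hper t ht) x]
    exact hM (t, x + v) ⟨ht, hv⟩
  have hfar : ∀ t ∈ Icc 0 T, ∀ x z, 2 * M < ‖z‖ →
      h t (x + z) - h t x - L * ‖z‖ - ε * t ≤ 0 := by
    intro t ht x z hz
    have a := abs_le.1 (hM t ht (x + z))
    have b := abs_le.1 (hM t ht x)
    have c : 0 ≤ ε * t := mul_nonneg hε.le ht.1
    have e : ‖z‖ ≤ L * ‖z‖ := le_mul_of_one_le_left (norm_nonneg _) hL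
    linarith [a.2, b.1]
  let W : ℝ × Ed d × Ed d → ℝ := fun p =>
    h p.1 (p.2.1 + p.2.2) - h p.1 p.2.1 - L * ‖p.2.2‖ - ε * p.1
  let K : Set (ℝ × Ed d × Ed d) := Icc 0 T ×ˢ (Qd d ×ˢ Metric.closedBall 0 (2 * M))
  have hK : IsCompact K :=
    isCompact_Icc.prod ((Qd_compact d).prod (isCompact_closedBall _ _))
  have hWc : ContinuousOn W K := by
    have c1 : ContinuousOn (fun p : ℝ × Ed d × Ed d => h p.1 (p.2.1 + p.2.2)) K :=
      hcont.comp (f := fun p : ℝ × Ed d × Ed d => (p.1, p.2.1 + p.2.2))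
        (by fun_prop) (fun p hp => ⟨hp.1, mem_univ _⟩)
    have c2 : ContinuousOn (fun p : ℝ × Ed d × Ed d => h p.1 p.2.1) K :=
      hcont.comp (f := fun p : ℝ × Ed d × Ed d => (p.1, p.2.1))
        (by fun_prop) (fun p hp => ⟨hp.1, mem_univ _⟩)
    exact ((c1.sub c2).sub (by fun_prop)).sub (by fun_prop)
  have hred : ∀ t ∈ Icc 0 T, ∀ x z, 0 < W (t, x, z) → ∃ p ∈ K, W p = W (t, x, z) := by
    intro t ht x z hpos
    obtain ⟨v, hv, hv2⟩ := exists_shift x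
    refine ⟨(t, x + v, z), ⟨ht, hv, ?_⟩, ?_⟩
    · rw [mem_closedBall_zero_iff]
      by_contra! hz
      exact absurd hpos (not_lt.2 (hfar t ht x z hz))
    · have e1 := hv2 _ (hper t ht) x
      have e2 := hv2 _ (hper t ht) (x + z)
      simp only [W]
      rw [e1, add_right_comm, e2]
  have hpos1 : 0 < W (t1, y1, x1 - y1) := by
    simp only [W]
    rw [add_sub_cancel]
    exact hw1
  obtain ⟨p1, hp1, hp1W⟩ := hred t1 ht1 _ _ hpos1
  obtain ⟨⟨t0, x0, z0⟩, hp0, hmax⟩ := hK.exists_isMaxOn ⟨p1, hp1⟩ hWc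
  have hpos0 : 0 < W (t0, x0, z0) := by
    have := hmax hp1
    simp only [mem_ofPred_eq] at this
    linarith
  have hglob : ∀ t ∈ Icc 0 T, ∀ x z, W (t, x, z) ≤ W (t0, x0, z0) := by
    intro t ht x z
    rcases le_or_gt (W (t, x, z)) 0 with hle | hgt
    · linarith
    · obtain ⟨p, hp, hpe⟩ := hred t ht x z hgt
      rw [← hpe]
      exact hmax hp
  have ht0 : t0 ∈ Icc 0 T := hp0.1
  have hz0 : z0 ≠ 0 := by
    rintro rfl
    simp only [W] at hpos0
    simp at hpos0
    nlinarith [ht0.1]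
  have ht0pos : 0 < t0 := by
    rcases ht0.1.lt_or_eq with hlt | heq
    · exact hlt
    · exfalso
      subst heq
      have := h0 (x0 + z0) x0
      simp only [W] at hpos0
      rw [add_sub_cancel_left] at this
      linarith
  have hsl := slopeDiv_le (hregx t0 ht0) L hL (x0 + z0) x0 (by simpa using hz0) (by
    intro x' y'
    have := hglob t0 ht0 y' (x' - y')
    simp only [W] at this
    rw [add_sub_cancel] at this
    rw [add_sub_cancel_left]
    linarith)
  have hder : HasDerivWithinAt (fun s => h s (x0 + z0) - h s x0 - L * ‖z0‖ - ε * s)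
      (slopeDiv (h t0) (x0 + z0) - slopeDiv (h t0) x0 - ε) (Icc 0 T) t0 := by
    have := (((hpde (x0 + z0) t0 ht0).sub (hpde x0 t0 ht0)).sub_const (L * ‖z0‖)).sub
      ((hasDerivWithinAt_id t0 (Icc 0 T)).const_mul ε)
    exact this.congr_deriv (by simp)
  have hmx : IsLocalMaxOn (fun s => h s (x0 + z0) - h s x0 - L * ‖z0‖ - ε * s) (Icc 0 T) t0 :=
    IsMaxOn.localize (fun s hs => hglob s hs x0 z0)
  have hcone : (0 - t0) ∈ posTangentConeAt (Icc 0 T) t0 :=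
    sub_mem_posTangentConeAt_of_segment_subset
      ((convex_Icc 0 T).segment_subset ht0 ⟨le_rfl, ht0.1.trans ht0.2⟩)
  have := hmx.hasFDerivWithinAt_nonpos hder.hasFDerivWithinAt hcone
  simp at this
  nlinarith

theorem stmt0 (d : ℕ) (hd : 1 ≤ d) (T : ℝ) (hT : 0 < T) (h : ℝ → Ed d → ℝ)
    (hper : ∀ t ∈ Icc 0 T, PeriodicSpace (h t))
    (hregx : ∀ t ∈ Icc 0 T, ContDiff ℝ 2 (h t))
    (hcont : ContinuousOn (fun p : ℝ × Ed d => h p.1 p.2) (Icc 0 T ×ˢ univ))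
    (hpde : ∀ (x : Ed d), ∀ t ∈ Icc 0 T,
      HasDerivWithinAt (fun s => h s x) (slopeDiv (h t) x) (Icc 0 T) t) :
    ∀ t ∈ Icc 0 T, ∀ x : Ed d,
      gradNorm (h t) x ≤ max (⨆ y : Ed d, gradNorm (h 0) y) 1 := by
  intro t ht x
  have h0T : (0:ℝ) ∈ Icc 0 T := ⟨le_rfl, hT.le⟩
  set L := max (⨆ y : Ed d, gradNorm (h 0) y) 1 with hLdef
  have hL : 1 ≤ L := le_max_right _ _
  have hbd := grad_bdd (hregx 0 h0T) (hper 0 h0T)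
  have hinit : ∀ x y, h 0 x - h 0 y ≤ L * ‖x - y‖ := by
    intro x y
    have := Convex.norm_image_sub_le_of_norm_fderiv_le (𝕜 := ℝ) (f := h 0) (C := L) (s := univ)
      (fun z _ => (hregx 0 h0T).differentiable (by norm_num) z)
      (fun z _ => by
        rw [← gradNorm_eq]
        exact (le_ciSup hbd z).trans (le_max_left _ _)) convex_univ (mem_univ y) (mem_univ x)
    exact (le_abs_self _).trans this
  have hlip : ∀ x y, h t x - h t y ≤ L * ‖x - y‖ := by
    intro x y
    refine le_of_forall_pos_le_add fun δ hδ => ?_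
    have := main_lip d T h hper hregx hcont hpde L hL hinit (δ / T) (by positivity) t ht x y
    have h2 : δ / T * t ≤ δ := by
      rw [div_mul_eq_mul_div, div_le_iff₀ hT]
      exact mul_le_mul_of_nonneg_left ht.2 hδ.le
    linarith
  rw [gradNorm_eq]
  refine norm_fderiv_le_of_lip' ℝ (by linarith) (Filter.Eventually.of_forall fun y => ?_)
  rw [Real.norm_eq_abs, abs_le]
  have a := hlip y x
  have b := hlip x y
  rw [norm_sub_rev] at b
  constructor <;> linarith
end
end

section
/- Let T > 0. Suppose h : [0,T] × ℝ → ℝ is 2π-periodic in x, continuously differentiable in time and twice continuously differentiable in space, and is a classical solution of ∂_t h = ∂_x((∂_x h)³ − ∂_x h) on [0,T] × ℝ. Then for every t ∈ [0,T], sup_{x ∈ ℝ} |∂_x h(t,x)| ≤ max{ sup_{x ∈ ℝ} |∂_x h(0,x)|, 1/√3 }. -/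
open Real MeasureTheory Set Filter

noncomputable section

lemma aux_second {f : ℝ → ℝ} {x : ℝ} (hf : ContDiff ℝ 2 f) (hx : IsLocalMax f x) :
    deriv (deriv f) x ≤ 0 := by
  by_contra hc
  push Not at hc
  have h1 := isLocalMin_of_deriv_deriv_pos hc hx.deriv_eq_zero hf.continuous.continuousAt
  have h2 : f =ᶠ[nhds x] fun _ => f x := by
    filter_upwards [hx, h1] with z hz hz'
    exact le_antisymm hz hz'
  have h3 := h2.deriv.deriv_eq
  simp at h3
  linarith

lemma aux_time {g : ℝ → ℝ} {g' T t : ℝ} (ht : 0 < t) (htT : t ≤ T)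
    (hg : HasDerivWithinAt g g' (Icc 0 T) t) (hm : ∀ s ∈ Icc 0 T, g s ≤ g t) : 0 ≤ g' := by
  have h1 : HasDerivWithinAt g g' (Ioo 0 t) t :=
    hg.mono fun s hs => ⟨hs.1.le, hs.2.le.trans htT⟩
  rw [hasDerivWithinAt_iff_tendsto_slope' (by simp)] at h1
  have : (nhdsWithin t (Ioo 0 t)).NeBot := right_nhdsWithin_Ioo_neBot ht
  refine ge_of_tendsto h1 ?_
  filter_upwards [self_mem_nhdsWithin] with s hs
  rw [slope_def_field]
  exact div_nonneg_of_nonpos (by linarith [hm s ⟨hs.1.le, hs.2.le.trans htT⟩])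
    (by linarith [hs.2])

lemma aux_rhs {f : ℝ → ℝ} {x M : ℝ} (hf : ContDiff ℝ 2 f) (hM : deriv f x = M) :
    deriv (fun y => (deriv f y) ^ 3 - deriv f y) x = (3 * M ^ 2 - 1) * deriv (deriv f) x := by
  have hd : HasDerivAt (deriv f) (deriv (deriv f) x) x :=
    ((contDiff_succ_iff_deriv (n := 1)).1 hf).2.2.differentiable (by norm_num) x |>.hasDerivAt
  rw [((hd.fun_pow 3).fun_sub hd).deriv, hM]
  push_cast
  ring

lemma aux_sub {f : ℝ → ℝ} (M : ℝ) (hf : ContDiff ℝ 2 f) :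
    ContDiff ℝ 2 (fun z => f z - M * z) ∧ deriv (fun z => f z - M * z) = fun z => deriv f z - M := by
  refine ⟨hf.sub (contDiff_const.mul contDiff_id), ?_⟩
  ext z
  have := (hf.differentiable (by norm_num) z).hasDerivAt.fun_sub ((hasDerivAt_id z).const_mul M)
  simpa using this.deriv

lemma aux_main (T : ℝ) (h : ℝ → ℝ → ℝ)
    (hper : ∀ t ∈ Icc 0 T, Function.Periodic (h t) (2 * Real.pi))
    (hregx : ∀ t ∈ Icc 0 T, ContDiff ℝ 2 (h t))
    (hcont : ContinuousOn (fun p : ℝ × ℝ => h p.1 p.2) (Icc 0 T ×ˢ univ))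
    (hpde : ∀ (x : ℝ), ∀ t ∈ Icc 0 T,
      HasDerivWithinAt (fun s => h s x)
        (deriv (fun y => (deriv (h t) y) ^ 3 - deriv (h t) y) x) (Icc 0 T) t)
    (M : ℝ) (hM0 : 0 ≤ M) (hM : 1 ≤ 3 * M ^ 2) (h0 : ∀ y, deriv (h 0) y ≤ M) :
    ∀ t ∈ Icc 0 T, ∀ y s : ℝ, 0 ≤ s → h t (y + s) - h t y ≤ M * s := by
  by_contra hc
  push Not at hc
  obtain ⟨t0, ht0, y0, s0, hs0, hlt⟩ := hc
  have hT : 0 ≤ T := ht0.1.trans ht0.2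
  obtain ⟨ε, hε, hε'⟩ : ∃ ε > 0, 0 < h t0 (y0 + s0) - h t0 y0 - M * s0 - ε * t0 := by
    refine ⟨(h t0 (y0 + s0) - h t0 y0 - M * s0) / (2 * (T + 1)), by
      apply div_pos <;> linarith, ?_⟩
    have : (h t0 (y0 + s0) - h t0 y0 - M * s0) / (2 * (T + 1)) * t0
        < (h t0 (y0 + s0) - h t0 y0 - M * s0) := by
      rw [div_mul_eq_mul_div, div_lt_iff₀ (by linarith)]
      apply mul_lt_mul_of_pos_left <;> linarith [ht0.2]
    linarith
  have hpi : 0 < 2 * π := by positivity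
  let Φ : ℝ × ℝ × ℝ → ℝ := fun p =>
    h p.1 (p.2.1 + p.2.2) - h p.1 p.2.1 - M * p.2.2 - ε * p.1
  let K : Set (ℝ × ℝ × ℝ) := Icc 0 T ×ˢ (Icc 0 (2 * π) ×ˢ Icc 0 (2 * π))
  have hK : IsCompact K := isCompact_Icc.prod (isCompact_Icc.prod isCompact_Icc)
  have hΦ : ContinuousOn Φ K := by
    have e1 : ContinuousOn (fun p : ℝ × ℝ × ℝ => h p.1 (p.2.1 + p.2.2)) K :=
      hcont.comp (f := fun p : ℝ × ℝ × ℝ => (p.1, p.2.1 + p.2.2))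
        (by fun_prop) (fun p hp => ⟨hp.1, mem_univ _⟩)
    have e2 : ContinuousOn (fun p : ℝ × ℝ × ℝ => h p.1 p.2.1) K :=
      hcont.comp (f := fun p : ℝ × ℝ × ℝ => (p.1, p.2.1))
        (by fun_prop) (fun p hp => ⟨hp.1, mem_univ _⟩)
    exact ((e1.sub e2).sub (by fun_prop)).sub (by fun_prop)
  obtain ⟨⟨t, y, s⟩, ⟨ht, hy, hs⟩, hmax⟩ := hK.exists_isMaxOn
    ⟨(0, 0, 0), ⟨⟨le_rfl, hT⟩, ⟨le_rfl, hpi.le⟩, ⟨le_rfl, hpi.le⟩⟩⟩ hΦ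
  simp only at ht hy hs
  -- global maximality
  have hglob : ∀ t' ∈ Icc 0 T, ∀ y' s' : ℝ, 0 ≤ s' → Φ (t', y', s') ≤ Φ (t, y, s) := by
    intro t' ht' y' s' hs'
    obtain ⟨y1, hy1, n, hn⟩ : ∃ y1 ∈ Ico 0 (0 + 2 * π), ∃ n : ℤ, y' = y1 + n * (2 * π) :=
      ⟨toIcoMod hpi 0 y', toIcoMod_mem_Ico hpi 0 y', toIcoDiv hpi 0 y', by
        have := toIcoMod_add_toIcoDiv_zsmul hpi 0 y'
        simp only [zsmul_eq_mul] at this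
        exact this.symm⟩
    obtain ⟨s1, hs1, m, hm⟩ : ∃ s1 ∈ Ico 0 (0 + 2 * π), ∃ n : ℤ, s' = s1 + n * (2 * π) :=
      ⟨toIcoMod hpi 0 s', toIcoMod_mem_Ico hpi 0 s', toIcoDiv hpi 0 s', by
        have := toIcoMod_add_toIcoDiv_zsmul hpi 0 s'
        simp only [zsmul_eq_mul] at this
        exact this.symm⟩
    rw [zero_add] at hy1 hs1
    have hle : s1 ≤ s' := by
      have : 0 ≤ m := by
        by_contra hneg
        have h1 : (m : ℝ) ≤ -1 := by exact_mod_cast (by omega : m ≤ -1)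
        nlinarith [hs1.2]
      have h2 : (0 : ℝ) ≤ m := by exact_mod_cast this
      nlinarith
    have h1 := hmax (show (t', y1, s1) ∈ K from
      ⟨ht', ⟨hy1.1, hy1.2.le⟩, ⟨hs1.1, hs1.2.le⟩⟩)
    refine le_trans ?_ h1
    have p1 : h t' y' = h t' y1 := by rw [hn]; exact (hper t' ht').int_mul n y1
    have p2 : h t' (y' + s') = h t' (y1 + s1) := by
      have := (hper t' ht').int_mul (n + m) (y1 + s1)
      rw [← this]; congr 1; rw [hn, hm]; push_cast; ring
    simp only [Φ, p1, p2]
    nlinarith [mul_le_mul_of_nonneg_left hle hM0]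
  have hpos : 0 < Φ (t, y, s) := lt_of_lt_of_le hε' (hglob t0 ht0 y0 s0 hs0)
  have hspos : 0 < s := by
    rcases hs.1.eq_or_lt with e | e
    · subst e
      simp only [Φ, add_zero] at hpos
      nlinarith [mul_nonneg hε.le ht.1]
    · exact e
  have htpos : 0 < t := by
    rcases ht.1.eq_or_lt with e | e
    · subst e
      simp only [Φ] at hpos
      have := image_sub_le_mul_sub_of_deriv_le
        ((hregx 0 ht).differentiable (by norm_num)) h0 (x := y) (y := y + s) (by linarith)
      nlinarith
    · exact e
  have hC := hregx t ht
  -- maximum in the first point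
  have hm1 : IsLocalMax (fun z => h t z - M * z) (y + s) := by
    filter_upwards [lt_mem_nhds (show y < y + s by linarith)] with z hz
    have := hglob t ht y (z - y) (by linarith)
    simp only [Φ, add_sub_cancel] at this
    linarith
  have hm2 : IsLocalMax (fun z => -h t z - (-M) * z) y := by
    filter_upwards [gt_mem_nhds (show y < y + s by linarith)] with z hz
    have := hglob t ht z (y + s - z) (by linarith)
    simp only [Φ, add_sub_cancel] at this
    linarith
  have a1 := aux_sub M hC
  have a2 := aux_sub (-M) hC.neg
  have b1 := hm1.deriv_eq_zero
  have b2 := hm2.deriv_eq_zero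
  have c1 := aux_second a1.1 hm1
  have c2 := aux_second a2.1 hm2
  have en : deriv (fun z => -h t z) = fun z => -deriv (h t) z := by
    ext z; simp
  rw [a1.2] at b1 c1
  simp only [a2.2] at b2 c2
  rw [en] at b2 c2
  simp only [deriv_sub_const_fun, deriv.fun_neg] at b1 b2 c1 c2
  have d1 := hpde (y + s) t ht
  have d2 := hpde y t ht
  rw [aux_rhs hC (M := M) (by linarith)] at d1 d2
  have hfin := aux_time htpos ht.2 ((d1.sub d2).sub ((hasDerivWithinAt_id t _).const_mul ε))
    (fun r hr => by
      have := hglob r hr y s hs.1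
      simp only [Φ] at this
      simp only [Pi.sub_apply, id]
      linarith)
  nlinarith [mul_nonneg (sub_nonneg.2 hM) (neg_nonneg.2 c1), mul_nonneg (sub_nonneg.2 hM) (neg_nonneg.2 c2)]

lemma aux_deriv {f : ℝ → ℝ} {M : ℝ} (hf : Differentiable ℝ f)
    (hb : ∀ y s : ℝ, 0 ≤ s → f (y + s) - f y ≤ M * s) (x : ℝ) : deriv f x ≤ M := by
  have h1 := (hf x).hasDerivAt.hasDerivWithinAt (s := Ioi x)
  rw [hasDerivWithinAt_iff_tendsto_slope' (by simp)] at h1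
  refine le_of_tendsto h1 ?_
  filter_upwards [self_mem_nhdsWithin] with z hz
  have hz' : x < z := hz
  rw [slope_def_field, div_le_iff₀ (by linarith)]
  have := hb x (z - x) (by linarith)
  simpa using this

/-- 1D maximum principle, Proposition 1.1, Eq. (1.7):
if `h ∈ C_t^1 C_x^2([0,T] × 𝕋)` is a classical solution of `∂_t h = ∂_x((∂_x h)³ − ∂_x h)`,
then for every `t ∈ [0,T]`, `‖∂_x h(t,·)‖_∞ ≤ max{‖∂_x h(0,·)‖_∞, 1/√3}`. -/
theorem stmt1 (T : ℝ) (hT : 0 < T) (h : ℝ → ℝ → ℝ)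
    (hper : ∀ t ∈ Icc 0 T, Function.Periodic (h t) (2 * Real.pi))
    (hregx : ∀ t ∈ Icc 0 T, ContDiff ℝ 2 (h t))
    (hcont : ContinuousOn (fun p : ℝ × ℝ => h p.1 p.2) (Icc 0 T ×ˢ univ))
    (hpde : ∀ (x : ℝ), ∀ t ∈ Icc 0 T,
      HasDerivWithinAt (fun s => h s x)
        (deriv (fun y => (deriv (h t) y) ^ 3 - deriv (h t) y) x) (Icc 0 T) t) :
    ∀ t ∈ Icc 0 T, ∀ x : ℝ,
      |deriv (h t) x| ≤ max (⨆ y : ℝ, |deriv (h 0) y|) (1 / Real.sqrt 3) := by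
  have h0mem : (0 : ℝ) ∈ Icc 0 T := ⟨le_rfl, hT.le⟩
  have hbdd : BddAbove (range fun y : ℝ => |deriv (h 0) y|) := by
    have hc : Continuous fun y : ℝ => |deriv (h 0) y| :=
      ((hregx 0 h0mem).continuous_deriv (by norm_num)).abs
    have hp : Function.Periodic (fun y : ℝ => |deriv (h 0) y|) (2 * π) := by
      intro y
      have e : (fun z => h 0 (z + 2 * π)) = h 0 := funext (hper 0 h0mem)
      have := deriv_comp_add_const (h 0) (2 * π) y
      rw [e] at this
      simp only [this]
    exact (hp.compact_of_continuous (by positivity) hc).bddAbove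
  set M := max (⨆ y : ℝ, |deriv (h 0) y|) (1 / Real.sqrt 3) with hMdef
  have hle : 1 / Real.sqrt 3 ≤ M := le_max_right _ _
  have hq : (0 : ℝ) < 1 / Real.sqrt 3 := by positivity
  have hM0 : 0 ≤ M := hq.le.trans hle
  have hM : 1 ≤ 3 * M ^ 2 := by
    have h1 : (1 / Real.sqrt 3) ^ 2 = 1 / 3 := by
      rw [div_pow, Real.sq_sqrt (by norm_num)]; norm_num
    nlinarith [pow_le_pow_left₀ hq.le hle 2]
  have hinit : ∀ y, |deriv (h 0) y| ≤ M := fun y => (le_ciSup hbdd y).trans (le_max_left _ _)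
  intro t ht x
  have en : ∀ t, deriv (fun z => -h t z) = fun z => -deriv (h t) z := fun t => by
    ext z; simp
  have u1 := aux_deriv ((hregx t ht).differentiable (by norm_num))
    (aux_main T h hper hregx hcont hpde M hM0 hM (fun y => (abs_le.1 (hinit y)).2) t ht) x
  have u2 := aux_deriv ((hregx t ht).neg.differentiable (by norm_num))
    (aux_main T (fun t x => -h t x) (fun t ht y => by simp only [hper t ht y])
      (fun t ht => (hregx t ht).neg) hcont.neg
      (fun x t ht => by
        have e : (fun y => (deriv (fun z => -h t z) y) ^ 3 - deriv (fun z => -h t z) y)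
            = fun y => -((deriv (h t) y) ^ 3 - deriv (h t) y) := by
          rw [en]; ext y; ring
        rw [e, deriv.fun_neg]
        exact (hpde x t ht).neg)
      M hM0 hM (fun y => by
        rw [en]; linarith [(abs_le.1 (hinit y)).1]) t ht) x
  rw [en] at u2
  exact abs_le.2 ⟨by linarith, u1⟩
end
end
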